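/- Let R = [k,l] × [m,n] be a closed rectangle in ℝ² with k < l and m < n, and let p, q ∈ (1,∞) satisfy 1/p + 1/q < 1. Then there exist continuous functions G, H : R × R → [0,∞) depending only on R, p, q, which are symmetric (G(P,Q) = G(Q,P) and H(P,Q) = H(Q,P)) and vanish on the diagonal (G(P,P) = H(P,P) = 0), such that for every u ∈ C¹(R) and all points P = (w,x), Q = (w',x') in R, |u(w,x) − u(w',x')| ≤ ‖∂u/∂x‖_{L^p(R)} · G(P,Q) + ‖∂u/∂y‖_{L^q(R)} · H(P,Q). -/

import Mathlib

open MeasureTheory Set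

lemma aff1 (g : ℝ → ENNReal) (hg : Measurable g) (c s : ℝ) (hs : 0 < s) :
    ∫⁻ x, g (c + s * x) = ENNReal.ofReal s⁻¹ * ∫⁻ x, g x := by
  have h1 : ∫⁻ x, g (c + s * x) = ∫⁻ y, g (c + y) ∂(Measure.map (fun x => s * x) volume) := by
    rw [lintegral_map (by fun_prop) (by fun_prop)]
  rw [h1, Real.map_volume_mul_left hs.ne', lintegral_smul_measure,
    lintegral_add_left_eq_self g c, abs_of_pos (inv_pos.2 hs), smul_eq_mul]

lemma aff2 (F : ℝ × ℝ → ENNReal) (hF : Measurable F) (c₁ c₂ s₁ s₂ : ℝ) (h₁ : 0 < s₁)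
    (h₂ : 0 < s₂) :
    ∫⁻ z : ℝ × ℝ, F (c₁ + s₁ * z.1, c₂ + s₂ * z.2)
      = ENNReal.ofReal (s₁ * s₂)⁻¹ * ∫⁻ z, F z := by
  rw [Measure.volume_eq_prod, lintegral_prod _ (by fun_prop), lintegral_prod _ (by fun_prop)]
  have : ∀ x, ∫⁻ y, F (c₁ + s₁ * x, c₂ + s₂ * y)
      = ENNReal.ofReal s₂⁻¹ * ∫⁻ y, F (c₁ + s₁ * x, y) := fun x =>
    aff1 (fun y => F (c₁ + s₁ * x, y)) (by fun_prop) c₂ s₂ h₂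
  simp only [this]
  have hm : Measurable (fun x => ∫⁻ y, F (x, y)) := hF.lintegral_prod_right'
  rw [lintegral_const_mul _ (show Measurable (fun x => ∫⁻ y, F (c₁ + s₁ * x, y)) from
      hm.comp (by fun_prop : Measurable fun x => c₁ + s₁ * x)),
    aff1 (fun x => ∫⁻ y, F (x, y)) hm c₁ s₁ h₁, ← mul_assoc, mul_inv, mul_comm s₁⁻¹,
    ENNReal.ofReal_mul (by positivity)]

lemma hold (F : ℝ × ℝ → ENNReal) (hF : Measurable F) (c₁ c₂ s₁ s₂ p : ℝ) (h₁ : 0 < s₁)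
    (h₂ : 0 < s₂) (hp : 1 < p) :
    ∫⁻ z in Icc (0:ℝ) 1 ×ˢ Icc (0:ℝ) 1, F (c₁ + s₁ * z.1, c₂ + s₂ * z.2)
      ≤ ENNReal.ofReal ((s₁ * s₂) ^ (-(1 / p))) * (∫⁻ z, F z ^ p) ^ (1 / p) := by
  have hpq := Real.HolderConjugate.conjExponent hp
  have hm : Measurable (fun z : ℝ × ℝ => F (c₁ + s₁ * z.1, c₂ + s₂ * z.2)) := by fun_prop
  have h := ENNReal.lintegral_mul_le_Lp_mul_Lq
    (volume.restrict (Icc (0:ℝ) 1 ×ˢ Icc (0:ℝ) 1)) hpq hm.aemeasurable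
    (aemeasurable_const (b := (1 : ENNReal)))
  have hv : (volume : Measure (ℝ × ℝ)) (Icc (0:ℝ) 1 ×ˢ Icc (0:ℝ) 1) = 1 := by
    rw [Measure.volume_eq_prod, Measure.prod_prod]; simp
  simp only [Pi.mul_apply, mul_one, ENNReal.one_rpow, lintegral_const, Measure.restrict_apply_univ,
    hv] at h
  refine h.trans ?_
  have h3 : ∫⁻ z in Icc (0:ℝ) 1 ×ˢ Icc (0:ℝ) 1, F (c₁ + s₁ * z.1, c₂ + s₂ * z.2) ^ p
      ≤ ENNReal.ofReal (s₁ * s₂)⁻¹ * ∫⁻ z, F z ^ p := by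
    rw [← aff2 (fun z => F z ^ p) (by fun_prop) c₁ c₂ s₁ s₂ h₁ h₂]
    exact setLIntegral_le_lintegral _ _
  have hp0 : 0 ≤ 1 / p := by positivity
  refine (ENNReal.rpow_le_rpow h3 hp0).trans_eq ?_
  rw [ENNReal.mul_rpow_of_nonneg _ _ hp0, ENNReal.ofReal_rpow_of_pos (by positivity),
    Real.rpow_neg (by positivity), Real.inv_rpow (by positivity)]

lemma curve (k l m n α β : ℝ) (hkl : k < l) (hmn : m < n) (hα : 1 ≤ α) (hβ : 1 ≤ β)
    (R : Set (ℝ × ℝ)) (hR : R = Icc k l ×ˢ Icc m n)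
    (u : ℝ × ℝ → ℝ) (hu : ContDiffOn ℝ 1 u R) (P Z : ℝ × ℝ) (hP : P ∈ R) (hZ : Z ∈ R)
    (D₁ D₂ : ℝ) (h₁ : |Z.1 - P.1| ≤ D₁) (h₂ : |Z.2 - P.2| ≤ D₂) :
    ENNReal.ofReal |u P - u Z| ≤ ∫⁻ t in Ioc (0:ℝ) 1,
      (ENNReal.ofReal (α * t ^ (α - 1) * D₁) *
        R.indicator (fun z => ‖fderivWithin ℝ u R z (1, 0)‖ₑ)
          (P.1 + t ^ α * (Z.1 - P.1), P.2 + t ^ β * (Z.2 - P.2)) +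
      ENNReal.ofReal (β * t ^ (β - 1) * D₂) *
        R.indicator (fun z => ‖fderivWithin ℝ u R z (0, 1)‖ₑ)
          (P.1 + t ^ α * (Z.1 - P.1), P.2 + t ^ β * (Z.2 - P.2))) := by
  set γ : ℝ → ℝ × ℝ := fun t => (P.1 + t ^ α * (Z.1 - P.1), P.2 + t ^ β * (Z.2 - P.2)) with hγ
  have hUD : UniqueDiffOn ℝ R := by
    rw [hR]; exact (uniqueDiffOn_Icc hkl).prod (uniqueDiffOn_Icc hmn)
  have hDc : ContinuousOn (fderivWithin ℝ u R) R := hu.continuousOn_fderivWithin hUD le_rfl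
  have hmaps : MapsTo γ (Icc 0 1) R := by
    intro t ht
    have a0 : 0 ≤ t ^ α := Real.rpow_nonneg ht.1 _
    have b0 : 0 ≤ t ^ β := Real.rpow_nonneg ht.1 _
    have a1 : t ^ α ≤ 1 := Real.rpow_le_one ht.1 ht.2 (by linarith)
    have b1 : t ^ β ≤ 1 := Real.rpow_le_one ht.1 ht.2 (by linarith)
    rw [hR] at hP hZ ⊢
    obtain ⟨⟨p1, p2⟩, p3, p4⟩ := hP
    obtain ⟨⟨z1, z2⟩, z3, z4⟩ := hZ
    refine ⟨⟨?_, ?_⟩, ?_, ?_⟩ <;> simp only [hγ] <;> nlinarith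
  have hγd : ∀ t, HasDerivAt γ (α * t ^ (α - 1) * (Z.1 - P.1), β * t ^ (β - 1) * (Z.2 - P.2)) t := by
    intro t
    have e1 := ((Real.hasDerivAt_rpow_const (x := t) (p := α) (Or.inr hα)).mul_const
      (Z.1 - P.1)).const_add P.1
    have e2 := ((Real.hasDerivAt_rpow_const (x := t) (p := β) (Or.inr hβ)).mul_const
      (Z.2 - P.2)).const_add P.2
    exact e1.prodMk e2
  have hγc : Continuous γ := continuous_iff_continuousAt.2 fun t => (hγd t).continuousAt
  set γ' : ℝ → ℝ × ℝ :=
    fun t => (α * t ^ (α - 1) * (Z.1 - P.1), β * t ^ (β - 1) * (Z.2 - P.2)) with hγ'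
  have hγ'c : Continuous γ' := by
    have := Real.continuous_rpow_const (q := α - 1) (by linarith)
    have := Real.continuous_rpow_const (q := β - 1) (by linarith)
    fun_prop
  have hcomp : ContinuousOn (fun t => fderivWithin ℝ u R (γ t) (γ' t)) (Icc 0 1) :=
    (hDc.comp hγc.continuousOn hmaps).clm_apply hγ'c.continuousOn
  have hftc : ∫ t in (0:ℝ)..1, fderivWithin ℝ u R (γ t) (γ' t) = u (γ 1) - u (γ 0) := by
    apply intervalIntegral.integral_eq_sub_of_hasDerivAt_of_le (f := fun t => u (γ t)) zero_le_one
    · exact hu.continuousOn.comp hγc.continuousOn hmaps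
    · intro t ht
      have d1 : HasFDerivWithinAt u (fderivWithin ℝ u R (γ t)) R (γ t) :=
        ((hu.differentiableOn one_ne_zero) _ (hmaps (Ioo_subset_Icc_self ht))).hasFDerivWithinAt
      have d2 := d1.comp_hasDerivWithinAt t (hγd t).hasDerivWithinAt hmaps
      exact d2.hasDerivAt (Icc_mem_nhds ht.1 ht.2)
    · exact ContinuousOn.intervalIntegrable (by rwa [uIcc_of_le zero_le_one])
  have g1 : γ 1 = Z := by simp [hγ]
  have g0 : γ 0 = P := by
    simp [hγ, Real.zero_rpow (by linarith : α ≠ 0), Real.zero_rpow (by linarith : β ≠ 0)]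
  rw [g1, g0, intervalIntegral.integral_of_le zero_le_one] at hftc
  rw [abs_sub_comm, ← hftc, ← Real.norm_eq_abs, ofReal_norm]
  refine (enorm_integral_le_lintegral_enorm _).trans ?_
  refine setLIntegral_mono' measurableSet_Ioc fun t ht => ?_
  have hmem : γ t ∈ R := hmaps (Ioc_subset_Icc_self ht)
  rw [indicator_of_mem hmem, indicator_of_mem hmem]
  have hsplit : fderivWithin ℝ u R (γ t) (γ' t) =
      (α * t ^ (α - 1) * (Z.1 - P.1)) * fderivWithin ℝ u R (γ t) (1, 0) +
      (β * t ^ (β - 1) * (Z.2 - P.2)) * fderivWithin ℝ u R (γ t) (0, 1) := by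
    have : γ' t = (α * t ^ (α - 1) * (Z.1 - P.1)) • ((1:ℝ), (0:ℝ)) +
      (β * t ^ (β - 1) * (Z.2 - P.2)) • ((0:ℝ), (1:ℝ)) := by
      simp [hγ']
    rw [this, map_add, map_smul, map_smul, smul_eq_mul, smul_eq_mul]
  rw [hsplit]
  refine (enorm_add_le _ _).trans ?_
  rw [enorm_mul _ (fderivWithin ℝ u R (γ t) (1, 0)), enorm_mul _ (fderivWithin ℝ u R (γ t) (0, 1))]
  have t1 : 0 ≤ t ^ (α - 1) := Real.rpow_nonneg ht.1.le _
  have t2 : 0 ≤ t ^ (β - 1) := Real.rpow_nonneg ht.1.le _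
  have q1 : 0 ≤ α * t ^ (α - 1) := mul_nonneg (by linarith) t1
  have q2 : 0 ≤ β * t ^ (β - 1) := mul_nonneg (by linarith) t2
  refine add_le_add (mul_le_mul_left ?_ _) (mul_le_mul_left ?_ _)
  · rw [Real.enorm_eq_ofReal_abs, abs_mul, abs_of_nonneg q1]
    exact ENNReal.ofReal_le_ofReal (mul_le_mul_of_nonneg_left h₁ q1)
  · rw [Real.enorm_eq_ofReal_abs, abs_mul, abs_of_nonneg q2]
    exact ENNReal.ofReal_le_ofReal (mul_le_mul_of_nonneg_left h₂ q2)

lemma term_meas (F : ℝ × ℝ → ENNReal) (hF : Measurable F) (e D α β w x c d δ₁ δ₂ : ℝ) :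
    Measurable (fun v : (ℝ × ℝ) × ℝ => ENNReal.ofReal (e * v.2 ^ (e - 1) * D) *
      F (w + v.2 ^ α * (c + δ₁ * v.1.1 - w), x + v.2 ^ β * (d + δ₂ * v.1.2 - x))) := by
  fun_prop

lemma term_est (F : ℝ × ℝ → ENNReal) (hF : Measurable F)
    (e L L₁ L₂ α β w x c d s p : ℝ) (he : 1 ≤ e) (hL : 0 < L) (hL₁ : 0 < L₁) (hL₂ : 0 < L₂)
    (hs : 0 < s) (hp : 1 < p) :
    ∫⁻ ζ in Icc (0:ℝ) 1 ×ˢ Icc (0:ℝ) 1, ∫⁻ t in Ioc (0:ℝ) 1,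
      ENNReal.ofReal (e * t ^ (e - 1) * (s ^ e * L)) *
      F (w + t ^ α * (c + s ^ α * L₁ * ζ.1 - w), x + t ^ β * (d + s ^ β * L₂ * ζ.2 - x))
    ≤ ENNReal.ofReal (L * (L₁ * L₂) ^ (-(1 / p)) * s ^ (e - (α + β) / p)) *
      (∫⁻ t in Ioc (0:ℝ) 1, ENNReal.ofReal (e * t ^ (e - (α + β) / p - 1))) *
      (∫⁻ z, F z ^ p) ^ (1 / p) := by
  rw [lintegral_lintegral_swap (term_meas F hF e _ α β w x c d _ _).aemeasurable]
  rw [← lintegral_const_mul _ (by fun_prop), ← lintegral_mul_const _ (by fun_prop)]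
  refine setLIntegral_mono' measurableSet_Ioc fun t ht => ?_
  have t0 : 0 < t := ht.1
  rw [lintegral_const_mul _ (by fun_prop)]
  have h := hold F hF (w + t ^ α * (c - w)) (x + t ^ β * (d - x)) (t ^ α * (s ^ α * L₁))
    (t ^ β * (s ^ β * L₂)) p (by positivity) (by positivity) hp
  have hc : ∀ ζ : ℝ × ℝ, F (w + t ^ α * (c + s ^ α * L₁ * ζ.1 - w),
      x + t ^ β * (d + s ^ β * L₂ * ζ.2 - x)) =
      F (w + t ^ α * (c - w) + t ^ α * (s ^ α * L₁) * ζ.1,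
        x + t ^ β * (d - x) + t ^ β * (s ^ β * L₂) * ζ.2) := by
    intro ζ; congr 2 <;> ring
  simp only [hc]
  refine (mul_le_mul_right h _).trans_eq ?_
  rw [← mul_assoc]
  congr 1
  rw [← ENNReal.ofReal_mul (by positivity), ← ENNReal.ofReal_mul (by positivity)]
  congr 1
  have e1 : t ^ α * (s ^ α * L₁) * (t ^ β * (s ^ β * L₂))
      = t ^ (α + β) * s ^ (α + β) * (L₁ * L₂) := by
    rw [Real.rpow_add t0, Real.rpow_add hs]; ring
  have e2 : ∀ r : ℝ, 0 < r → (r ^ (α + β)) ^ (-(1 / p)) = r ^ (-((α + β) / p)) := by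
    intro r hr
    rw [← Real.rpow_mul hr.le]; congr 1; ring
  rw [e1, Real.mul_rpow (by positivity) (by positivity),
    Real.mul_rpow (by positivity) (by positivity), e2 t t0, e2 s hs]
  have e3 : t ^ (e - (α + β) / p - 1) = t ^ (e - 1) * t ^ (-((α + β) / p)) := by
    rw [← Real.rpow_add t0]; congr 1; ring
  have e4 : s ^ (e - (α + β) / p) = s ^ e * s ^ (-((α + β) / p)) := by
    rw [← Real.rpow_add hs]; congr 1
  rw [e3, e4]; ring

lemma const_fin (e r : ℝ) (hr : 0 < r) :
    ∫⁻ t in Ioc (0:ℝ) 1, ENNReal.ofReal (e * t ^ (r - 1)) ≠ ⊤ := by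
  have h : IntervalIntegrable (fun t : ℝ => e * t ^ (r - 1)) volume 0 1 :=
    (intervalIntegral.intervalIntegrable_rpow' (by linarith)).const_mul e
  rw [intervalIntegrable_iff_integrableOn_Ioc_of_le zero_le_one] at h
  exact h.lintegral_lt_top.ne

lemma pre_est (k l m n α β : ℝ) (hkl : k < l) (hmn : m < n) (hα : 1 ≤ α) (hβ : 1 ≤ β)
    (R : Set (ℝ × ℝ)) (hR : R = Icc k l ×ˢ Icc m n)
    (u : ℝ × ℝ → ℝ) (hu : ContDiffOn ℝ 1 u R) (F₁ F₂ : ℝ × ℝ → ENNReal)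
    (hF₁ : F₁ = R.indicator (fun z => ‖fderivWithin ℝ u R z (1, 0)‖ₑ))
    (hF₂ : F₂ = R.indicator (fun z => ‖fderivWithin ℝ u R z (0, 1)‖ₑ))
    (hm₁ : Measurable F₁) (hm₂ : Measurable F₂)
    (P : ℝ × ℝ) (δ₁ δ₂ c d : ℝ) (a0 : 0 < δ₁) (b0 : 0 < δ₂)
    (hc : k ≤ c) (hc' : c + δ₁ ≤ l) (hd : m ≤ d) (hd' : d + δ₂ ≤ n)
    (hP₁ : P.1 ∈ Icc c (c + δ₁)) (hP₂ : P.2 ∈ Icc d (d + δ₂)) (hPR : P ∈ R) :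
    ∫⁻ ζ in Icc (0:ℝ) 1 ×ˢ Icc (0:ℝ) 1,
      ENNReal.ofReal |u P - u (c + δ₁ * ζ.1, d + δ₂ * ζ.2)|
    ≤ (∫⁻ ζ in Icc (0:ℝ) 1 ×ˢ Icc (0:ℝ) 1, ∫⁻ t in Ioc (0:ℝ) 1,
      ENNReal.ofReal (α * t ^ (α - 1) * δ₁) *
      F₁ (P.1 + t ^ α * (c + δ₁ * ζ.1 - P.1), P.2 + t ^ β * (d + δ₂ * ζ.2 - P.2))) +
      ∫⁻ ζ in Icc (0:ℝ) 1 ×ˢ Icc (0:ℝ) 1, ∫⁻ t in Ioc (0:ℝ) 1,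
      ENNReal.ofReal (β * t ^ (β - 1) * δ₂) *
      F₂ (P.1 + t ^ α * (c + δ₁ * ζ.1 - P.1), P.2 + t ^ β * (d + δ₂ * ζ.2 - P.2)) := by
  have M₁ := term_meas F₁ hm₁ α δ₁ α β P.1 P.2 c d δ₁ δ₂
  have N₁ : Measurable (fun ζ : ℝ × ℝ => ∫⁻ t in Ioc (0:ℝ) 1,
      ENNReal.ofReal (α * t ^ (α - 1) * δ₁) *
      F₁ (P.1 + t ^ α * (c + δ₁ * ζ.1 - P.1), P.2 + t ^ β * (d + δ₂ * ζ.2 - P.2))) :=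
    M₁.lintegral_prod_right'
  rw [← lintegral_add_left N₁]
  refine setLIntegral_mono' (measurableSet_Icc.prod measurableSet_Icc) fun ζ hζ => ?_
  have K₁ : Measurable (fun t : ℝ =>
      ENNReal.ofReal (α * t ^ (α - 1) * δ₁) *
      F₁ (P.1 + t ^ α * (c + δ₁ * ζ.1 - P.1), P.2 + t ^ β * (d + δ₂ * ζ.2 - P.2))) := by
    fun_prop
  rw [← lintegral_add_left K₁]
  obtain ⟨⟨z1, z2⟩, z3, z4⟩ := hζ
  have i1 : 0 ≤ δ₁ * ζ.1 := by positivity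
  have i2 : 0 ≤ δ₂ * ζ.2 := by positivity
  have i3 : δ₁ * ζ.1 ≤ δ₁ := mul_le_of_le_one_right a0.le z2
  have i4 : δ₂ * ζ.2 ≤ δ₂ := mul_le_of_le_one_right b0.le z4
  subst hF₁ hF₂
  refine curve k l m n α β hkl hmn hα hβ R hR u hu P (c + δ₁ * ζ.1, d + δ₂ * ζ.2) hPR ?_ δ₁ δ₂
    ?_ ?_
  · rw [hR]
    refine ⟨⟨?_, ?_⟩, ?_, ?_⟩ <;> simp only <;> linarith
  · rw [abs_le]; constructor <;> simp only <;> linarith [hP₁.1, hP₁.2]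
  · rw [abs_le]; constructor <;> simp only <;> linarith [hP₂.1, hP₂.2]

/-- Estimate for the oscillation of `u` around a point of a box. -/
lemma point_est (k l m n p q α β : ℝ) (hkl : k < l) (hmn : m < n) (hα : 1 ≤ α) (hβ : 1 ≤ β)
    (hp : 1 < p) (hq : 1 < q)
    (R : Set (ℝ × ℝ)) (hR : R = Icc k l ×ˢ Icc m n)
    (u : ℝ × ℝ → ℝ) (hu : ContDiffOn ℝ 1 u R) (F₁ F₂ : ℝ × ℝ → ENNReal)
    (hF₁ : F₁ = R.indicator (fun z => ‖fderivWithin ℝ u R z (1, 0)‖ₑ))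
    (hF₂ : F₂ = R.indicator (fun z => ‖fderivWithin ℝ u R z (0, 1)‖ₑ))
    (hm₁ : Measurable F₁) (hm₂ : Measurable F₂)
    (P : ℝ × ℝ) (s c d : ℝ) (hs : 0 < s)
    (hc : k ≤ c) (hc' : c + s ^ α * (l - k) ≤ l) (hd : m ≤ d) (hd' : d + s ^ β * (n - m) ≤ n)
    (hP₁ : P.1 ∈ Icc c (c + s ^ α * (l - k))) (hP₂ : P.2 ∈ Icc d (d + s ^ β * (n - m))) :
    ∫⁻ ζ in Icc (0:ℝ) 1 ×ˢ Icc (0:ℝ) 1,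
      ENNReal.ofReal |u P - u (c + s ^ α * (l - k) * ζ.1, d + s ^ β * (n - m) * ζ.2)|
    ≤ ENNReal.ofReal ((l - k) * ((l - k) * (n - m)) ^ (-(1 / p)) * s ^ (α - (α + β) / p)) *
      (∫⁻ t in Ioc (0:ℝ) 1, ENNReal.ofReal (α * t ^ (α - (α + β) / p - 1))) *
      (∫⁻ z, F₁ z ^ p) ^ (1 / p) +
      ENNReal.ofReal ((n - m) * ((l - k) * (n - m)) ^ (-(1 / q)) * s ^ (β - (α + β) / q)) *
      (∫⁻ t in Ioc (0:ℝ) 1, ENNReal.ofReal (β * t ^ (β - (α + β) / q - 1))) *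
      (∫⁻ z, F₂ z ^ q) ^ (1 / q) := by
  have L₁ : 0 < l - k := by linarith
  have L₂ : 0 < n - m := by linarith
  have hPR : P ∈ R := by
    rw [hR]
    exact ⟨⟨hc.trans hP₁.1, hP₁.2.trans hc'⟩, ⟨hd.trans hP₂.1, hP₂.2.trans hd'⟩⟩
  refine le_trans (pre_est k l m n α β hkl hmn hα hβ R hR u hu F₁ F₂ hF₁ hF₂ hm₁ hm₂ P _ _ c d
    (by positivity) (by positivity) hc hc' hd hd' hP₁ hP₂ hPR) (add_le_add
    (term_est F₁ hm₁ α (l - k) (l - k) (n - m) α β P.1 P.2 c d s p hα L₁ L₁ L₂ hs hp)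
    (term_est F₂ hm₂ β (n - m) (l - k) (n - m) α β P.1 P.2 c d s q hβ L₂ L₁ L₂ hs hq))

lemma box (k l a b δ : ℝ) (ha : a ∈ Icc k l) (hb : b ∈ Icc k l) (h : |a - b| ≤ δ)
    (hδ : δ ≤ l - k) : ∃ c, k ≤ c ∧ c + δ ≤ l ∧ a ∈ Icc c (c + δ) ∧ b ∈ Icc c (c + δ) := by
  obtain ⟨a1, a2⟩ := ha
  obtain ⟨b1, b2⟩ := hb
  obtain ⟨h1, h2⟩ := abs_le.1 h
  have m1 := min_le_left (min a b) (l - δ)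
  have m2 := min_le_right (min a b) (l - δ)
  have m3 := min_le_left a b
  have m4 := min_le_right a b
  refine ⟨min (min a b) (l - δ), le_min (le_min a1 b1) (by linarith), by linarith,
    ⟨by linarith, ?_⟩, ⟨by linarith, ?_⟩⟩
  all_goals
    rcases min_choice (min a b) (l - δ) with h | h <;> rw [h] <;>
    rcases min_choice a b with h' | h' <;> (try rw [h']) <;> linarith

lemma norm_eq (k l m n p : ℝ) (hkl : k < l) (hmn : m < n) (hp : 1 < p)
    (R : Set (ℝ × ℝ)) (hR : R = Icc k l ×ˢ Icc m n)
    (u : ℝ × ℝ → ℝ) (hu : ContDiffOn ℝ 1 u R) (v : ℝ × ℝ) :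
    Measurable (R.indicator (fun z => ‖fderivWithin ℝ u R z v‖ₑ)) ∧
    (∫⁻ z, (R.indicator (fun z => ‖fderivWithin ℝ u R z v‖ₑ) z) ^ p) ^ (1 / p) =
      ENNReal.ofReal (eLpNorm (fun z => fderiv ℝ u z v)
                (ENNReal.ofReal p) (volume.restrict R)).toReal := by
  have hUD : UniqueDiffOn ℝ R := by
    rw [hR]; exact (uniqueDiffOn_Icc hkl).prod (uniqueDiffOn_Icc hmn)
  have hDc : ContinuousOn (fun z => fderivWithin ℝ u R z v) R :=
    (hu.continuousOn_fderivWithin hUD le_rfl).clm_apply continuousOn_const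
  have hRm : MeasurableSet R := by rw [hR]; exact measurableSet_Icc.prod measurableSet_Icc
  have hRc : IsCompact R := by rw [hR]; exact isCompact_Icc.prod isCompact_Icc
  have hmeas : Measurable (R.indicator (fun z => ‖fderivWithin ℝ u R z v‖ₑ)) := by
    classical
    rw [← piecewise_eq_indicator]
    exact ContinuousOn.measurable_piecewise hDc.enorm continuousOn_const hRm
  refine ⟨hmeas, ?_⟩
  have hae : (fun z => fderiv ℝ u z v) =ᵐ[volume.restrict R]
      (fun z => fderivWithin ℝ u R z v) := by
    have h0 : (Ioo k l ×ˢ Ioo m n : Set (ℝ × ℝ)) =ᵐ[volume] R := by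
      rw [hR, Measure.volume_eq_prod]
      exact Measure.set_prod_ae_eq Ioo_ae_eq_Icc Ioo_ae_eq_Icc
    rw [← Measure.restrict_congr_set h0]
    refine (ae_restrict_iff' (measurableSet_Ioo.prod measurableSet_Ioo)).2 (ae_of_all _ ?_)
    intro z hz
    have : R ∈ nhds z := by
      rw [hR]; exact prod_mem_nhds (Icc_mem_nhds hz.1.1 hz.1.2) (Icc_mem_nhds hz.2.1 hz.2.2)
    simp only [fderivWithin_of_mem_nhds this]
  have hp0 : 0 < p := by linarith
  rw [eLpNorm_congr_ae hae]
  have hfin : eLpNorm (fun z => fderivWithin ℝ u R z v) (ENNReal.ofReal p) (volume.restrict R)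
      ≠ ⊤ := by
    obtain ⟨C, hC⟩ := hRc.exists_bound_of_continuousOn hDc
    have : IsFiniteMeasure (volume.restrict R) := ⟨by
      rw [Measure.restrict_apply_univ]; exact hRc.measure_lt_top⟩
    exact (MemLp.of_bound (hDc.aestronglyMeasurable hRm) C
      ((ae_restrict_iff' hRm).2 (ae_of_all _ hC))).eLpNorm_ne_top
  rw [ENNReal.ofReal_toReal hfin, eLpNorm_eq_lintegral_rpow_enorm_toReal
    (by simpa using hp0) ENNReal.ofReal_ne_top, ENNReal.toReal_ofReal hp0.le]
  congr 1
  rw [← lintegral_indicator hRm]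
  congr 1
  ext z
  by_cases hz : z ∈ R <;> simp [hz, hp0]

lemma exps (p q : ℝ) (hp : 1 < p) (hq : 1 < q) (hpq : 1 / p + 1 / q < 1) :
    ∃ α β : ℝ, 1 ≤ α ∧ 1 ≤ β ∧ 0 < α - (α + β) / p ∧ 0 < β - (α + β) / q := by
  have p0 : 0 < 1 / p := by positivity
  have q0 : 0 < 1 / q := by positivity
  obtain ⟨a, ha1, ha2⟩ : ∃ a, 1 / p < a ∧ a < 1 - 1 / q := exists_between (by linarith)
  have a0 : 0 < a := by linarith
  have b0 : 0 < 1 - a := by linarith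
  have hsum : 1 / (1 - a) + 1 / a = 1 / (1 - a) * (1 / a) := by
    field_simp; ring
  refine ⟨1 / (1 - a), 1 / a, ?_, ?_, ?_, ?_⟩
  · rw [le_div_iff₀ b0]; linarith
  · rw [le_div_iff₀ a0]; linarith
  · rw [hsum]
    have : 1 / (1 - a) - 1 / (1 - a) * (1 / a) / p = 1 / (1 - a) * (1 / a) * (a - 1 / p) := by
      field_simp
    rw [this]
    have : 0 < a - 1 / p := by linarith
    positivity
  · rw [hsum]
    have : 1 / a - 1 / (1 - a) * (1 / a) / q = 1 / (1 - a) * (1 / a) * (1 - a - 1 / q) := by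
      field_simp
    rw [this]
    have : 0 < 1 - a - 1 / q := by linarith
    positivity

/-- Theorem 2.3 (restricted to a rectangle): nonstandard Sobolev-type embedding with
different exponents for the two partial derivatives. -/
theorem stmt_2 (k l m n p q : ℝ) (hkl : k < l) (hmn : m < n)
    (hp : 1 < p) (hq : 1 < q) (hpq : 1 / p + 1 / q < 1) :
    ∀ R : Set (ℝ × ℝ), R = Icc k l ×ˢ Icc m n →
    ∃ G H : ℝ × ℝ → ℝ × ℝ → ℝ,
      ContinuousOn (fun z : (ℝ × ℝ) × (ℝ × ℝ) => G z.1 z.2) (R ×ˢ R) ∧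
      ContinuousOn (fun z : (ℝ × ℝ) × (ℝ × ℝ) => H z.1 z.2) (R ×ˢ R) ∧
      (∀ P ∈ R, ∀ Q ∈ R, 0 ≤ G P Q ∧ 0 ≤ H P Q ∧ G P Q = G Q P ∧ H P Q = H Q P) ∧
      (∀ P ∈ R, G P P = 0 ∧ H P P = 0) ∧
      ∀ u : ℝ × ℝ → ℝ, ContDiffOn ℝ 1 u R →
        ∀ P ∈ R, ∀ Q ∈ R,
          |u P - u Q| ≤
            (eLpNorm (fun z => fderiv ℝ u z ((1 : ℝ), (0 : ℝ)))
                (ENNReal.ofReal p) (volume.restrict R)).toReal * G P Q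
            + (eLpNorm (fun z => fderiv ℝ u z ((0 : ℝ), (1 : ℝ)))
                (ENNReal.ofReal q) (volume.restrict R)).toReal * H P Q := by
  intro R hR
  obtain ⟨α, β, hα, hβ, h1, h2⟩ := exps p q hp hq hpq
  have L₁ : 0 < l - k := by linarith
  have L₂ : 0 < n - m := by linarith
  have α0 : 0 < α := by linarith
  have β0 : 0 < β := by linarith
  set σ : ℝ × ℝ → ℝ × ℝ → ℝ := fun P Q =>
    max ((|P.1 - Q.1| / (l - k)) ^ (1 / α)) ((|P.2 - Q.2| / (n - m)) ^ (1 / β)) with hσ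
  have σ0 : ∀ P Q, 0 ≤ σ P Q := fun P Q => le_max_of_le_left (by positivity)
  have σsymm : ∀ P Q, σ P Q = σ Q P := fun P Q => by
    simp only [hσ, abs_sub_comm P.1, abs_sub_comm P.2]
  have σdiag : ∀ P, σ P P = 0 := fun P => by
    simp only [hσ, sub_self, abs_zero, zero_div]
    rw [Real.zero_rpow (by positivity), Real.zero_rpow (by positivity), max_self]
  have σcont : Continuous (fun z : (ℝ × ℝ) × (ℝ × ℝ) => σ z.1 z.2) := by
    have := Real.continuous_rpow_const (q := 1 / α) (by positivity)
    have := Real.continuous_rpow_const (q := 1 / β) (by positivity)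
    simp only [hσ]
    refine Continuous.max ?_ ?_
    · exact Continuous.comp (g := fun x : ℝ => x ^ (1 / α)) (by assumption) (by fun_prop)
    · exact Continuous.comp (g := fun x : ℝ => x ^ (1 / β)) (by assumption) (by fun_prop)
  have hC₁ := const_fin α _ h1
  have hC₂ := const_fin β _ h2
  have hpt := point_est k l m n p q α β hkl hmn hα hβ hp hq R hR
  set C₁ := ∫⁻ t in Ioc (0:ℝ) 1, ENNReal.ofReal (α * t ^ (α - (α + β) / p - 1))
  set C₂ := ∫⁻ t in Ioc (0:ℝ) 1, ENNReal.ofReal (β * t ^ (β - (α + β) / q - 1))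
  set e₁ := α - (α + β) / p
  set e₂ := β - (α + β) / q
  set A₁ := (l - k) * ((l - k) * (n - m)) ^ (-(1 / p)) with hA₁
  set A₂ := (n - m) * ((l - k) * (n - m)) ^ (-(1 / q)) with hA₂
  have A₁0 : 0 ≤ A₁ := by positivity
  have A₂0 : 0 ≤ A₂ := by positivity
  refine ⟨fun P Q => 2 * (A₁ * σ P Q ^ e₁ * C₁.toReal), fun P Q => 2 * (A₂ * σ P Q ^ e₂ * C₂.toReal),
    ?_, ?_, ?_, ?_, ?_⟩
  · have := (Real.continuous_rpow_const (q := e₁) h1.le).comp σcont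
    exact (continuous_const.mul ((continuous_const.mul this).mul continuous_const)).continuousOn
  · have := (Real.continuous_rpow_const (q := e₂) h2.le).comp σcont
    exact (continuous_const.mul ((continuous_const.mul this).mul continuous_const)).continuousOn
  · intro P _ Q _
    have := σ0 P Q
    refine ⟨by positivity, by positivity, ?_, ?_⟩ <;> simp only [σsymm P Q]
  · intro P _
    simp only [σdiag, Real.zero_rpow h1.ne', Real.zero_rpow h2.ne']
    simp
  · intro u hu P hP Q hQ
    beta_reduce
    obtain ⟨hm₁, hn₁⟩ := norm_eq k l m n p hkl hmn hp R hR u hu (1, 0)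
    obtain ⟨hm₂, hn₂⟩ := norm_eq k l m n q hkl hmn hq R hR u hu (0, 1)
    rcases (σ0 P Q).eq_or_lt' with hs | hs
    · have hle := max_le_iff.1 hs.le
      have x1 : |P.1 - Q.1| / (l - k) = 0 := by
        have := (Real.rpow_eq_zero (by positivity) (by positivity)).1
          (le_antisymm hle.1 (by positivity))
        exact this
      have x2 : |P.2 - Q.2| / (n - m) = 0 := by
        have := (Real.rpow_eq_zero (by positivity) (by positivity)).1
          (le_antisymm hle.2 (by positivity))
        exact this
      have y1 : P.1 = Q.1 := by
        rw [div_eq_zero_iff, or_iff_left L₁.ne', abs_eq_zero, sub_eq_zero] at x1; exact x1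
      have y2 : P.2 = Q.2 := by
        rw [div_eq_zero_iff, or_iff_left L₂.ne', abs_eq_zero, sub_eq_zero] at x2; exact x2
      have : P = Q := Prod.ext y1 y2
      subst this
      rw [sub_self, abs_zero]
      positivity
    · have w1 : |P.1 - Q.1| ≤ σ P Q ^ α * (l - k) := by
        rw [← div_le_iff₀ L₁]
        have := Real.rpow_le_rpow (by positivity) (le_max_left _ _ : _ ≤ σ P Q) α0.le
        rwa [← Real.rpow_mul (by positivity), one_div_mul_cancel α0.ne', Real.rpow_one] at this
      have w2 : |P.2 - Q.2| ≤ σ P Q ^ β * (n - m) := by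
        rw [← div_le_iff₀ L₂]
        have := Real.rpow_le_rpow (by positivity) (le_max_right _ _ : _ ≤ σ P Q) β0.le
        rwa [← Real.rpow_mul (by positivity), one_div_mul_cancel β0.ne', Real.rpow_one] at this
      have hP' := hP
      have hQ' := hQ
      rw [hR] at hP' hQ'
      have s1 : σ P Q ≤ 1 := by
        refine max_le (Real.rpow_le_one (by positivity) ?_ (by positivity))
          (Real.rpow_le_one (by positivity) ?_ (by positivity))
        · rw [div_le_one L₁, abs_le]
          constructor <;> linarith [hP'.1.1, hP'.1.2, hQ'.1.1, hQ'.1.2]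
        · rw [div_le_one L₂, abs_le]
          constructor <;> linarith [hP'.2.1, hP'.2.2, hQ'.2.1, hQ'.2.2]
      generalize σ P Q = s at *
      obtain ⟨c, c1, c2, c3, c4⟩ := box k l P.1 Q.1 (s ^ α * (l - k)) hP'.1 hQ'.1 w1
        (mul_le_of_le_one_left L₁.le (Real.rpow_le_one hs.le s1 α0.le))
      obtain ⟨d, d1, d2, d3, d4⟩ := box m n P.2 Q.2 (s ^ β * (n - m)) hP'.2 hQ'.2 w2
        (mul_le_of_le_one_left L₂.le (Real.rpow_le_one hs.le s1 β0.le))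
      have bP := hpt u hu _ _ rfl rfl hm₁ hm₂ P s c d hs c1 c2 d1 d2 c3 d3
      have bQ := hpt u hu _ _ rfl rfl hm₁ hm₂ Q s c d hs c1 c2 d1 d2 c4 d4
      rw [hn₁, hn₂] at bP bQ
      generalize hE₁ : (eLpNorm (fun z => fderiv ℝ u z ((1 : ℝ), (0 : ℝ)))
                (ENNReal.ofReal p) (volume.restrict R)).toReal = N₁ at *
      generalize hE₂ : (eLpNorm (fun z => fderiv ℝ u z ((0 : ℝ), (1 : ℝ)))
                (ENNReal.ofReal q) (volume.restrict R)).toReal = N₂ at *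
      have N₁0 : 0 ≤ N₁ := hE₁ ▸ ENNReal.toReal_nonneg
      have N₂0 : 0 ≤ N₂ := hE₂ ▸ ENNReal.toReal_nonneg
      have hv : (volume : Measure (ℝ × ℝ)) (Icc (0:ℝ) 1 ×ˢ Icc (0:ℝ) 1) = 1 := by
        rw [Measure.volume_eq_prod, Measure.prod_prod]; simp
      have hSm : MeasurableSet (Icc (0:ℝ) 1 ×ˢ Icc (0:ℝ) 1) :=
        measurableSet_Icc.prod measurableSet_Icc
      have hmeasP : AEMeasurable (fun ζ : ℝ × ℝ => ENNReal.ofReal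
          |u P - u (c + s ^ α * (l - k) * ζ.1, d + s ^ β * (n - m) * ζ.2)|)
          (volume.restrict (Icc (0:ℝ) 1 ×ˢ Icc (0:ℝ) 1)) := by
        refine ENNReal.measurable_ofReal.comp_aemeasurable (ContinuousOn.aemeasurable ?_ hSm)
        refine (continuousOn_const.sub (hu.continuousOn.comp (by fun_prop) ?_)).abs
        rintro ζ ⟨⟨z1, z2⟩, z3, z4⟩
        have a0 : 0 < s ^ α * (l - k) := by positivity
        have b0 : 0 < s ^ β * (n - m) := by positivity
        have i1 : 0 ≤ s ^ α * (l - k) * ζ.1 := by positivity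
        have i2 : 0 ≤ s ^ β * (n - m) * ζ.2 := by positivity
        have i3 := mul_le_of_le_one_right a0.le z2
        have i4 := mul_le_of_le_one_right b0.le z4
        rw [hR]
        refine ⟨⟨?_, ?_⟩, ?_, ?_⟩ <;> simp only <;> linarith
      have key : ENNReal.ofReal |u P - u Q| ≤
          (∫⁻ ζ in Icc (0:ℝ) 1 ×ˢ Icc (0:ℝ) 1, ENNReal.ofReal
            |u P - u (c + s ^ α * (l - k) * ζ.1, d + s ^ β * (n - m) * ζ.2)|) +
          ∫⁻ ζ in Icc (0:ℝ) 1 ×ˢ Icc (0:ℝ) 1, ENNReal.ofReal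
            |u Q - u (c + s ^ α * (l - k) * ζ.1, d + s ^ β * (n - m) * ζ.2)| := by
        rw [← lintegral_add_left' hmeasP]
        calc ENNReal.ofReal |u P - u Q|
            = ∫⁻ ζ in Icc (0:ℝ) 1 ×ˢ Icc (0:ℝ) 1, ENNReal.ofReal |u P - u Q| := by
              rw [lintegral_const, Measure.restrict_apply_univ, hv, mul_one]
          _ ≤ _ := by
              refine lintegral_mono fun ζ => ?_
              rw [← ENNReal.ofReal_add (abs_nonneg _) (abs_nonneg _)]
              refine ENNReal.ofReal_le_ofReal ?_
              rw [abs_sub_comm (u Q)]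
              exact abs_sub_le _ _ _
      have key2 := key.trans (add_le_add bP bQ)
      rw [← ENNReal.ofReal_toReal hC₁, ← ENNReal.ofReal_toReal hC₂,
        ← ENNReal.ofReal_mul (by positivity), ← ENNReal.ofReal_mul (by positivity),
        ← ENNReal.ofReal_mul (by positivity), ← ENNReal.ofReal_mul (by positivity),
        ← ENNReal.ofReal_add (by positivity) (by positivity),
        ← ENNReal.ofReal_add (by positivity) (by positivity),
        ENNReal.ofReal_le_ofReal_iff (by positivity)] at key2
      refine key2.trans_eq ?_
      ring
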